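/- arXiv:math/0301370 — 2 statements merged into one kernel-verified Lean document; each statement's English description precedes it below -/
import Mathlib

section
/- Let K = ℚ(n,c) be the field of rational functions in two independent variables n and c over ℚ. Then the Galois group of the splitting field over K of the polynomial P_{n,c,5}(X) = X⁵ − nX⁴ + (c³ + 2nc − c² − c)X³ − (c³ + nc² − 3c²)X² + (c⁴ − 3c³)X + c⁴ is isomorphic to the dihedral group D₅ of order 10. -/
/-!
`P₅` is the polynomial whose roots are the `x`-coordinates of `P, P + A, …, P + 4A`, where `P` is
a generic point of the Kubert curve `y² + (1 - c)xy - cy = x³ - cx²` and `A = (0, 0)` has order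
`5`; translation by `A` and negation generate a dihedral group acting on these roots.

*Upper bound.* Consecutive roots `xᵢ, xᵢ₊₁` satisfy a symmetric biquadratic relation over `K`
(`biquad_pent`), and for fixed `xᵢ` it is a quadratic equation whose two solutions are `xᵢ₊₁` and
`xᵢ₋₁`. Hence every Galois automorphism preserves adjacency in the pentagon of roots, and the
Galois group embeds in the symmetry group of the pentagon (`mem_range_pentagonHom`).

*Lower bound.* `P₅` is irreducible (`irreducible_P₅`), so `5` divides the order. The product
`δ = ∏ (xᵢ₊₁ - xᵢ₋₁)` is fixed by rotations and negated by reflections. Its square is `c⁶` times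
a polynomial in `n` and `c` (`quintic_eq_prod`) that takes a negative value at a rational point,
so `δ ∉ K` (`not_isSquare_pentagonDisc`). Some automorphism is therefore a reflection, `2` divides
the order, and the embedding is onto.
-/

/-- The field `K = ℚ(n,c)` of rational functions in two independent variables
over `ℚ`: the fraction field of the polynomial ring `ℚ[n,c]`. -/
abbrev K : Type := FractionRing (MvPolynomial (Fin 2) ℚ)

/-- The variable `n` viewed in `K = ℚ(n,c)`. -/
noncomputable def n : K := algebraMap (MvPolynomial (Fin 2) ℚ) K (MvPolynomial.X 0)

/-- The variable `c` viewed in `K = ℚ(n,c)`. -/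
noncomputable def c : K := algebraMap (MvPolynomial (Fin 2) ℚ) K (MvPolynomial.X 1)

open Polynomial in
/-- The quintic `P_{n,c,5}` as a polynomial over `K = ℚ(n,c)`. -/
noncomputable def P₅ : Polynomial K :=
  X ^ 5 - C n * X ^ 4 + C (c ^ 3 + 2 * n * c - c ^ 2 - c) * X ^ 3
    - C (c ^ 3 + n * c ^ 2 - 3 * c ^ 2) * X ^ 2 + C (c ^ 4 - 3 * c ^ 3) * X
    + C (c ^ 4)

open Polynomial

/-! ### The pentagon and its symmetries -/

/-- The action of the dihedral group on the vertices of the pentagon, labelled by `ℤ/5`: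
`r i` is `k ↦ k + i` and `sr i` is `k ↦ -(k + i)`. -/
def pentagonHom : DihedralGroup 5 →* Equiv.Perm (ZMod 5) where
  toFun
    | .r i => Equiv.addRight i
    | .sr i => (Equiv.addRight i).trans (Equiv.neg (ZMod 5))
  map_one' := by
    refine Equiv.ext fun k => ?_
    change k + 0 = k
    simp
  map_mul' := by
    rintro (i | i) (j | j) <;> refine Equiv.ext fun k => ?_ <;> simp <;> ring

theorem pentagonHom_injective : Function.Injective pentagonHom := by
  intro a b h
  have h0 := DFunLike.congr_fun h 0
  have h1 := DFunLike.congr_fun h 1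
  revert a b
  simp only [pentagonHom, MonoidHom.coe_mk, OneHom.coe_mk]
  rintro (i | i) (j | j) h <;> simp <;> revert i j <;> decide

/-- A permutation of the vertices that preserves adjacency is a symmetry of the pentagon: the
step `π (i + 1) - π i = ±1` cannot change sign, as this would give `π (i + 2) = π i`. -/
theorem mem_range_pentagonHom (π : Equiv.Perm (ZMod 5))
    (h : ∀ i, π (i + 1) = π i + 1 ∨ π (i + 1) = π i - 1) : π ∈ pentagonHom.range := by
  have key : ∀ i, π (i + 1 + 1) ≠ π i := fun i he => by
    have := π.injective he
    rw [add_assoc, add_eq_left] at this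
    exact absurd this (by decide)
  rcases h 0 with h0 | h0
  · have step : ∀ i, π (i + 1) = π i + 1 → π (i + 1 + 1) = π (i + 1) + 1 := fun i hi => by
      rcases h (i + 1) with h1 | h1
      · exact h1
      · exact absurd (by rw [h1, hi]; ring) (key i)
    have h1 := step 0 h0
    have h2 := step _ h1
    have h3 := step _ h2
    refine ⟨.r (π 0), Equiv.ext fun k => ?_⟩
    change k + π 0 = π k
    rw [h0] at h1; rw [h1] at h2; rw [h2] at h3
    fin_cases k
    · exact zero_add _
    · exact (add_comm _ _).trans h0.symm
    · refine Eq.trans ?_ h1.symm; change (1 + 1 : ZMod 5) + π 0 = _; ring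
    · refine Eq.trans ?_ h2.symm; change (1 + 1 + 1 : ZMod 5) + π 0 = _; ring
    · refine Eq.trans ?_ h3.symm; change (1 + 1 + 1 + 1 : ZMod 5) + π 0 = _; ring
  · have step : ∀ i, π (i + 1) = π i - 1 → π (i + 1 + 1) = π (i + 1) - 1 := fun i hi => by
      rcases h (i + 1) with h1 | h1
      · exact absurd (by rw [h1, hi]; ring) (key i)
      · exact h1
    have h1 := step 0 h0
    have h2 := step _ h1
    have h3 := step _ h2
    refine ⟨.sr (-π 0), Equiv.ext fun k => ?_⟩
    change -(k + -π 0) = π k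
    rw [h0] at h1; rw [h1] at h2; rw [h2] at h3
    fin_cases k
    · change -((0 : ZMod 5) + -π 0) = π 0; ring
    · refine Eq.trans ?_ h0.symm; change -((1 : ZMod 5) + -π 0) = _; ring
    · refine Eq.trans ?_ h1.symm; change -((1 + 1 : ZMod 5) + -π 0) = _; ring
    · refine Eq.trans ?_ h2.symm; change -((1 + 1 + 1 : ZMod 5) + -π 0) = _; ring
    · refine Eq.trans ?_ h3.symm; change -((1 + 1 + 1 + 1 : ZMod 5) + -π 0) = _; ring

/-! ### The roots of the quintic -/

section Algebra
variable {F : Type*} [Field F] {n c x y : F}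

/-- With `P = (x, y)` on the Kubert curve `y² + (1 - c)xy - cy = x³ - cx²` and `A = (0, 0)`, the
`x`-coordinates of `P`, `P + A`, `P + 2A`, `P + 3A`, `P + 4A`. Here `c - (1 - c)x - y` is the
`y`-coordinate of `-P`. The formulas are meaningful for `x ∉ {0, c}`. -/
noncomputable def pent (c x y : F) : ZMod 5 → F :=
  ![x, c * y / x ^ 2,
    c * (x * (x - c) + c * (c - (1 - c) * x - y)) / (x - c) ^ 2,
    c * (x * (x - c) + c * y) / (x - c) ^ 2,
    c * (c - (1 - c) * x - y) / x ^ 2]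

/-- The symmetric biquadratic form that vanishes at `(x(P), x(P + A))`. -/
def biquad (c a b : F) : F := a ^ 2 * b ^ 2 + c * (1 - c) * a * b - c ^ 2 * (a + b) + c ^ 3

theorem biquad_pent (hx : x ≠ 0) (hxc : x - c ≠ 0)
    (hy : y ^ 2 + (1 - c) * x * y - c * y = x ^ 3 - c * x ^ 2) (i : ZMod 5) :
    biquad c (pent c x y i) (pent c x y (i + 1)) = 0 := by
  have h0 : biquad c x (c * y / x ^ 2) = 0 := by
    unfold biquad; field_simp; grind
  have h1 : biquad c (c * y / x ^ 2)
    (c * (x * (x - c) + c * (c - (1 - c) * x - y)) / (x - c) ^ 2) = 0 := by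
    unfold biquad; field_simp; grind
  have h2 : biquad c (c * (x * (x - c) + c * (c - (1 - c) * x - y)) / (x - c) ^ 2)
    (c * (x * (x - c) + c * y) / (x - c) ^ 2) = 0 := by
    unfold biquad; field_simp; grind
  have h3 : biquad c (c * (x * (x - c) + c * y) / (x - c) ^ 2)
    (c * (c - (1 - c) * x - y) / x ^ 2) = 0 := by
    unfold biquad; field_simp; grind
  have h4 : biquad c (c * (c - (1 - c) * x - y) / x ^ 2) x = 0 := by
    unfold biquad; field_simp; grind
  fin_cases i
  exacts [h0, h1, h2, h3, h4]

/-- The square of `c⁻³ ∏ i, (xᵢ₊₁ - xᵢ₋₁)`, written in terms of `n` and `c`. -/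
def pentagonDisc {R : Type*} [CommRing R] (n c : R) : R := 4 * n ^ 3 + (c ^ 2 - 30 * c + 1) * n ^ 2
  + (-24 * c ^ 3 + 34 * c ^ 2 + 14 * c) * n
  + (-4 * c ^ 5 + 4 * c ^ 4 + 40 * c ^ 3 - 91 * c ^ 2 + 4 * c)

/-- The polynomial `P₅` with parameters in an arbitrary commutative ring, so that it can be
specialised. -/
noncomputable def quintic {R : Type*} [CommRing R] (n c : R) : R[X] :=
  X ^ 5 - C n * X ^ 4 + C (c ^ 3 + 2 * n * c - c ^ 2 - c) * X ^ 3
    - C (c ^ 3 + n * c ^ 2 - 3 * c ^ 2) * X ^ 2 + C (c ^ 4 - 3 * c ^ 3) * X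
    + C (c ^ 4)

/-- If `x` is a root, the equation of the quintic, being linear in `n`, expresses `n` as a rational
function of `x` and `c`. The remaining roots pair up as `x₁, x₄` and `x₂, x₃`, with sums and products
rational in `x` and `c`; both claims then become identities in `x` and `c`. -/
theorem quintic_eq_prod (hx : x ≠ 0) (hxc : x - c ≠ 0)
    (hy : y ^ 2 + (1 - c) * x * y - c * y = x ^ 3 - c * x ^ 2)
    (hn : (quintic n c).eval x = 0) :
    quintic n c = ∏ i, (X - C (pent c x y i)) ∧
    (∏ i, (pent c x y (i + 1) - pent c x y (i - 1))) ^ 2 = c ^ 6 * pentagonDisc n c := by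
  have hn : n = (x ^ 5 + (c ^ 3 - c ^ 2 - c) * x ^ 3 - (c ^ 3 - 3 * c ^ 2) * x ^ 2
      + (c ^ 4 - 3 * c ^ 3) * x + c ^ 4) / (x ^ 2 * (x - c) ^ 2) := by
    simp only [quintic, eval_add, eval_sub, eval_mul, eval_pow, eval_X, eval_C] at hn
    rw [eq_div_iff (by positivity)]
    linear_combination -hn
  -- Opaque names for the roots keep the field computations below small.
  obtain ⟨x₁, h₁⟩ : ∃ t, c * y / x ^ 2 = t := ⟨_, rfl⟩
  obtain ⟨x₂, h₂⟩ : ∃ t, c * (x * (x - c) + c * (c - (1 - c) * x - y)) / (x - c) ^ 2 = t :=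
    ⟨_, rfl⟩
  obtain ⟨x₃, h₃⟩ : ∃ t, c * (x * (x - c) + c * y) / (x - c) ^ 2 = t := ⟨_, rfl⟩
  obtain ⟨x₄, h₄⟩ : ∃ t, c * (c - (1 - c) * x - y) / x ^ 2 = t := ⟨_, rfl⟩
  have hs : x₁ + x₄ = c * (c - (1 - c) * x) / x ^ 2 := by
    rw [← h₁, ← h₄]; field_simp; ring
  have hp : x₁ * x₄ = - c ^ 2 * (x - c) / x ^ 2 := by
    rw [← h₁, ← h₄]; field_simp; linear_combination (-c ^ 2) * hy
  have hs' : x₂ + x₃ = c * (2 * x * (x - c) + c * (c - (1 - c) * x)) / (x - c) ^ 2 := by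
    rw [← h₂, ← h₃]; field_simp; ring
  have hp' : x₂ * x₃ = c ^ 2 * (x ^ 2 * (x - c) ^ 2 + c * x * (x - c) * (c - (1 - c) * x)
      - c ^ 2 * x ^ 2 * (x - c)) / (x - c) ^ 4 := by
    rw [← h₂, ← h₃]; field_simp; linear_combination (- c ^ 4) * hy
  have ht : (x₃ - x₁) * (x₄ - x₂) = - ((c * x / (x - c)) ^ 2
      + (c * x / (x - c)) * (c ^ 2 / (x - c) ^ 2 - c / x ^ 2) * (c - (1 - c) * x)
      - (c ^ 2 / (x - c) ^ 2 - c / x ^ 2) ^ 2 * (x ^ 2 * (x - c))) := by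
    rw [← h₁, ← h₂, ← h₃, ← h₄]; field_simp
    linear_combination (c ^ 2 * (c * x ^ 2 - (x - c) ^ 2) ^ 2) * hy
  constructor
  · have e1 : n = x + (x₁ + x₄) + (x₂ + x₃) := by
      rw [hn, hs, hs']; field_simp; ring
    have e2 : c ^ 3 + 2 * n * c - c ^ 2 - c = x₁ * x₄ + x₂ * x₃ + (x₁ + x₄) * (x₂ + x₃)
        + x * ((x₁ + x₄) + (x₂ + x₃)) := by
      rw [hn, hs, hs', hp, hp']; field_simp; ring
    have e3 : c ^ 3 + n * c ^ 2 - 3 * c ^ 2 = x * (x₁ * x₄ + x₂ * x₃ + (x₁ + x₄) * (x₂ + x₃))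
        + x₁ * x₄ * (x₂ + x₃) + x₂ * x₃ * (x₁ + x₄) := by
      rw [hn, hs, hs', hp, hp']; field_simp; ring
    have e4 : c ^ 4 - 3 * c ^ 3 = x * (x₁ * x₄ * (x₂ + x₃) + x₂ * x₃ * (x₁ + x₄))
        + x₁ * x₄ * (x₂ * x₃) := by
      rw [hs, hs', hp, hp']; field_simp; ring
    have e5 : c ^ 4 = - (x * (x₁ * x₄ * (x₂ * x₃))) := by
      rw [hp, hp']; field_simp; ring
    have : ∏ i, (X - C (pent c x y i)) =
        (X - C x) * (X - C x₁) * (X - C x₂) * (X - C x₃) * (X - C x₄) := by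
      rw [← h₁, ← h₂, ← h₃, ← h₄]
      exact Fin.prod_univ_five (fun i : Fin 5 => X - C (pent c x y i))
    rw [this, quintic, e2, e3, e4, e5, e1]
    simp only [map_add, map_mul, map_neg]
    ring
  · have : ∏ i, (pent c x y (i + 1) - pent c x y (i - 1)) =
        (x₁ - x₄) * (x₂ - x) * (x₃ - x₁) * (x₄ - x₂) * (x - x₃) := by
      rw [← h₁, ← h₂, ← h₃, ← h₄]
      exact Fin.prod_univ_five (fun i : ZMod 5 => pent c x y (i + 1) - pent c x y (i - 1))
    rw [this]
    calc _ = ((x₁ + x₄) ^ 2 - 4 * (x₁ * x₄)) * (x ^ 2 - x * (x₂ + x₃) + x₂ * x₃) ^ 2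
        * ((x₃ - x₁) * (x₄ - x₂)) ^ 2 := by ring
      _ = _ := by
        rw [hs, hs', hp, hp', ht, hn, pentagonDisc]
        field_simp
        ring

end Algebra

/-- For `a ≠ 0` the biquadratic relation is a quadratic equation in its second argument, so it
has no solutions beyond two given distinct ones. -/
theorem biquad_eq_zero {F : Type*} [Field F] {c a t u v : F} (ha : a ≠ 0) (huv : u ≠ v)
    (ht : biquad c a t = 0) (hu : biquad c a u = 0) (hv : biquad c a v = 0) : t = u ∨ t = v := by
  unfold biquad at ht hu hv
  have h : (u - v) * (a ^ 2 * (u + v) + c * (1 - c) * a - c ^ 2) = 0 := by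
    linear_combination hu - hv
  have h1 := (mul_eq_zero.1 h).resolve_left (sub_ne_zero.2 huv)
  have h2 : a ^ 2 * ((t - u) * (t - v)) = 0 := by
    linear_combination ht - hu - (t - u) * h1
  rcases mul_eq_zero.1 ((mul_eq_zero.1 h2).resolve_left (pow_ne_zero 2 ha)) with h3 | h3
  · exact .inl (sub_eq_zero.1 h3)
  · exact .inr (sub_eq_zero.1 h3)

theorem biquad_comm {F : Type*} [Field F] (c a b : F) : biquad c a b = biquad c b a := by
  unfold biquad; ring

/-! ### Irreducibility -/

theorem map_quintic {R S : Type*} [CommRing R] [CommRing S] (f : R →+* S) (n c : R) :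
    (quintic n c).map f = quintic (f n) (f c) := by
  simp only [quintic, Polynomial.map_add, Polynomial.map_sub, Polynomial.map_mul,
    Polynomial.map_pow, map_X, map_C]
  simp only [map_add, map_sub, map_mul, map_pow, map_ofNat f]

theorem map_pentagonDisc {R S : Type*} [CommRing R] [CommRing S] (f : R →+* S) (n c : R) :
    f (pentagonDisc n c) = pentagonDisc (f n) (f c) := by
  simp only [pentagonDisc, map_add, map_sub, map_mul, map_pow, map_neg, map_one, map_ofNat f]

theorem quintic_eq {R : Type*} [CommRing R] (n c : R) :
    quintic n c = X ^ 5 + (C (-n) * X ^ 4 + C (c ^ 3 + 2 * n * c - c ^ 2 - c) * X ^ 3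
    + C (-(c ^ 3 + n * c ^ 2 - 3 * c ^ 2)) * X ^ 2 + C (c ^ 4 - 3 * c ^ 3) * X
    + C (c ^ 4)) := by
  simp only [quintic, map_neg]; ring

theorem monic_quintic {R : Type*} [CommRing R] (n c : R) : (quintic n c).Monic := by
  rw [quintic_eq]
  refine monic_X_pow_add (lt_of_le_of_lt (b := ((4 : ℕ) : WithBot ℕ)) ?_ (by norm_num))
  compute_degree!

theorem natDegree_quintic {R : Type*} [CommRing R] [Nontrivial R] (n c : R) :
    (quintic n c).natDegree = 5 := by
  rw [quintic_eq]; compute_degree!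

/-- The quintic at `n = 0`, `c = 3`. Modulo `5` it is `(X + 1) ^ 5`, and after the substitution
`X ↦ X - 1` it is Eisenstein at `5`. -/
theorem irreducible_spec :
    Irreducible (X ^ 5 + C 15 * X ^ 3 + C 81 : ℤ[X]) := by
  rw [← MulEquiv.irreducible_iff (taylorEquiv (-1 : ℤ))]
  have h : taylorEquiv (-1 : ℤ) (X ^ 5 + C 15 * X ^ 3 + C 81) =
    X ^ 5 + (C (-5) * X ^ 4 + C 25 * X ^ 3 + C (-55) * X ^ 2 + C 50 * X + C 65) := by
    change taylor (-1 : ℤ) _ = _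
    simp only [taylor_apply, add_comp, mul_comp, pow_comp, X_comp, C_comp]
    simp only [map_neg, map_one, map_ofNat]
    ring
  rw [h]
  have hd : (C (-5) * X ^ 4 + C 25 * X ^ 3 + C (-55) * X ^ 2 + C 50 * X + C 65 : ℤ[X]).degree
    < ((5 : ℕ) : WithBot ℕ) := by
    refine lt_of_le_of_lt (b := ((4 : ℕ) : WithBot ℕ)) ?_ (by norm_num)
    compute_degree!
  have hm := monic_X_pow_add hd
  have hdeg : (X ^ 5 + (C (-5) * X ^ 4 + C 25 * X ^ 3 + C (-55) * X ^ 2 + C 50 * X + C 65)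
     : ℤ[X]).natDegree = 5 := by compute_degree!
  have hp : (Ideal.span {(5 : ℤ)}).IsPrime :=
    (Ideal.span_singleton_prime (by norm_num)).2 (by norm_num)
  refine (hm.isEisensteinAt_of_mem_of_notMem hp.ne_top ?_ ?_).irreducible hp hm.isPrimitive
    (by rw [hdeg]; norm_num)
  · intro i hi
    rw [hdeg] at hi
    rw [Ideal.mem_span_singleton]
    interval_cases i <;> simp [coeff_X]
  · rw [Ideal.span_singleton_pow, Ideal.mem_span_singleton]
    simp [coeff_X]

/-- Gauss's lemma reduces irreducibility over `K` to the polynomial ring `ℚ[n,c]`; there one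
specialises at `n = 0`, `c = 3`, and Gauss's lemma for `ℤ ⊂ ℚ` leads to `irreducible_spec`. -/
theorem irreducible_P₅ : Irreducible P₅ := by
  have h1 : Irreducible (quintic (0 : ℤ) 3) := by
    convert irreducible_spec using 1
    norm_num [quintic]
  have h2 : Irreducible (quintic (0 : ℚ) 3) := by
    have := ((monic_quintic (0 : ℤ) 3).irreducible_iff_irreducible_map_fraction_map (K := ℚ)).1 h1
    rwa [map_quintic, map_zero, map_ofNat] at this
  have h3 : Irreducible (quintic (MvPolynomial.X 0 : MvPolynomial (Fin 2) ℚ) (MvPolynomial.X 1)) := by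
    refine (monic_quintic _ _).irreducible_of_irreducible_map
      (MvPolynomial.eval (![0, 3] : Fin 2 → ℚ)) _ ?_
    rw [map_quintic]
    simpa using h2
  have := ((monic_quintic _ _).irreducible_iff_irreducible_map_fraction_map (K := K)).1 h3
  rwa [map_quintic] at this

/-! ### The Galois group -/

theorem not_isSquare_pentagonDisc (z : K) : z ^ 2 ≠ pentagonDisc n c := by
  intro hz
  let q : MvPolynomial (Fin 2) ℚ := pentagonDisc (MvPolynomial.X 0) (MvPolynomial.X 1)
  have hq : z ^ 2 = algebraMap (MvPolynomial (Fin 2) ℚ) K q := by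
    rw [hz, map_pentagonDisc]; rfl
  -- `q` is a polynomial and `ℚ[n,c]` is integrally closed, so `z` is itself a polynomial.
  obtain ⟨w, rfl⟩ := IsIntegrallyClosed.exists_algebraMap_eq_of_isIntegral_pow
    (R := MvPolynomial (Fin 2) ℚ) (K := K) (x := z) (n := 2) (by norm_num) (hq ▸ isIntegral_algebraMap)
  rw [← map_pow] at hq
  -- Specialising at `(n, c) = (0, 1)` gives a rational square equal to `-47`.
  have hw := congrArg (MvPolynomial.eval (![0, 1] : Fin 2 → ℚ))
    (IsFractionRing.injective (MvPolynomial (Fin 2) ℚ) K hq)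
  rw [map_pentagonDisc, map_pow] at hw
  norm_num [pentagonDisc] at hw
  nlinarith [sq_nonneg (MvPolynomial.eval (![0, 1] : Fin 2 → ℚ) w)]

theorem c_ne_zero : (c : K) ≠ 0 := by
  unfold c
  rw [Ne, FaithfulSMul.algebraMap_eq_zero_iff]
  exact MvPolynomial.X_ne_zero 1

/-- The roots of `P₅` in an algebraic closure of `K`, in the cyclic order in which translation by
`A` permutes them: any root `x ∉ {0, c}` is the `x`-coordinate of a point of the Kubert curve, and
`x`, `x - c` do not vanish since `P₅` takes the values `c⁴` at `0` and `c⁶` at `c`. -/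
theorem exists_pentagon : ∃ p : ZMod 5 → AlgebraicClosure K,
    Function.Injective p ∧
    P₅.map (algebraMap K (AlgebraicClosure K)) = ∏ i, (X - C (p i)) ∧
    (∀ i, p i ≠ 0) ∧
    (∀ i, biquad (algebraMap K (AlgebraicClosure K) c) (p i) (p (i + 1)) = 0) ∧
    (∏ i, (p (i + 1) - p (i - 1))) ^ 2 = algebraMap K (AlgebraicClosure K) (c ^ 6 * pentagonDisc n c) := by
  set f := algebraMap K (AlgebraicClosure K) with hf
  have hmap : P₅.map f = quintic (f n) (f c) := map_quintic f n c
  have hc : f c ≠ 0 := (map_ne_zero f).2 c_ne_zero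
  obtain ⟨x, hx⟩ := IsAlgClosed.exists_root (quintic (f n) (f c))
    ((degree_ne_of_natDegree_ne (n := 0) (by rw [natDegree_quintic]; norm_num)))
  rw [IsRoot] at hx
  have hx' := hx
  simp only [quintic, eval_add, eval_sub, eval_mul, eval_pow, eval_X, eval_C] at hx'
  have hx0 : x ≠ 0 := by
    rintro rfl
    exact hc (by simpa using hx')
  have hxc : x - f c ≠ 0 := by
    intro h
    rw [sub_eq_zero.1 h] at hx'
    refine pow_ne_zero 6 hc ?_
    linear_combination hx'
  obtain ⟨y, hy⟩ := IsAlgClosed.exists_root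
    (X ^ 2 + (C ((1 - f c) * x - f c) * X + C (-(x ^ 3 - f c * x ^ 2))))
    (degree_ne_of_natDegree_ne (n := 0) (ne_of_eq_of_ne (b := 2) (by compute_degree!) (by norm_num)))
  simp only [IsRoot, eval_add, eval_mul, eval_pow, eval_X, eval_C] at hy
  have hy : y ^ 2 + (1 - f c) * x * y - f c * y = x ^ 3 - f c * x ^ 2 := by
    linear_combination hy
  obtain ⟨hprod, hdel⟩ := quintic_eq_prod hx0 hxc hy hx
  refine ⟨pent (f c) x y, ?_, hmap.trans hprod, fun i hi => ?_, biquad_pent hx0 hxc hy, ?_⟩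
  · have hs : (∏ i, (X - C (pent (f c) x y i))).Separable := by
      rw [← hprod, ← hmap]
      exact irreducible_P₅.separable.map
    exact (separable_prod_X_sub_C_iff.1 hs)
  · have h0 := congrArg (eval 0) hprod
    rw [eval_prod, Finset.prod_eq_zero (Finset.mem_univ i) (by simp [hi])] at h0
    simp [quintic] at h0
    exact c_ne_zero h0
  · rw [hdel, map_mul, map_pow, map_pentagonDisc]

/-- the Galois group over `ℚ(n,c)` of the splitting field of
`P_{n,c,5}` is isomorphic to the dihedral group `D₅` of order 10. -/
theorem stmt_14 : Nonempty (P₅.Gal ≃* DihedralGroup 5) := by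
  obtain ⟨p, hinj, hprod, hp0, hbi, hdel⟩ := exists_pentagon
  set f := algebraMap K (AlgebraicClosure K) with hf
  have hsplit : Fact ((P₅.map f).Splits) := ⟨IsAlgClosed.splits _⟩
  have hroot : ∀ t, t ∈ P₅.rootSet (AlgebraicClosure K) ↔ t ∈ Set.range p := by
    intro t
    rw [mem_rootSet, aeval_def, ← eval_map, hprod, eval_prod, Finset.prod_eq_zero_iff]
    simp [irreducible_P₅.ne_zero, sub_eq_zero, eq_comm]
  let e : ZMod 5 ≃ P₅.rootSet (AlgebraicClosure K) :=
    (Equiv.ofInjective p hinj).trans (Equiv.setCongr (Set.ext fun t => (hroot t).symm))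
  have he : ∀ i, (e i : AlgebraicClosure K) = p i := fun i => rfl
  -- The action on the roots, transported to the index set `ℤ/5`.
  let ρ : P₅.Gal →* Equiv.Perm (ZMod 5) :=
    (e.symm.permCongrHom : _ →* _).comp (Gal.galActionHom P₅ (AlgebraicClosure K))
  have hρ : Function.Injective ρ :=
    e.symm.permCongrHom.injective.comp (Gal.galActionHom_injective P₅ (AlgebraicClosure K))
  have hact : ∀ (σ : Gal(AlgebraicClosure K/K)) i,
      σ (p i) = p (ρ (Gal.restrict P₅ (AlgebraicClosure K) σ) i) := by
    intro σ i
    have h1 := Gal.restrict_smul σ (e i)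
    rw [he] at h1
    rw [← h1, ← he]
    congr 1
    exact (e.apply_symm_apply _).symm
  have hsurj := Gal.restrict_surjective P₅ (AlgebraicClosure K)
  have hle : ρ.range ≤ pentagonHom.range := by
    rintro _ ⟨g, rfl⟩
    obtain ⟨σ, rfl⟩ := hsurj g
    refine mem_range_pentagonHom _ fun i => ?_
    have h1 := congrArg σ (hbi i)
    rw [map_zero] at h1
    have h2 : σ (biquad (f c) (p i) (p (i + 1))) = biquad (f c) (σ (p i)) (σ (p (i + 1))) := by
      simp [biquad, hf]
    rw [h2, hact, hact] at h1
    set j := ρ (Gal.restrict P₅ (AlgebraicClosure K) σ) i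
    have h3 := hbi (j - 1)
    rw [sub_add_cancel, biquad_comm] at h3
    have hne : p (j + 1) ≠ p (j - 1) := fun h => by
      have h4 := hinj h
      rw [sub_eq_add_neg] at h4
      exact absurd (add_left_cancel h4) (by decide)
    exact (biquad_eq_zero (hp0 j) hne h1 (hbi j) h3).imp (fun h => hinj h) fun h => hinj h
  -- If all elements acted as rotations, the cyclic product of differences would lie in `K`, and
  -- its square divided by `c ^ 6` would be a square in `K`.
  have hrefl : ∃ g i, ρ g = pentagonHom (.sr i) := by
    by_contra! hcon
    have hfix : ∀ σ : Gal(AlgebraicClosure K/K),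
        σ (∏ i, (p (i + 1) - p (i - 1))) = ∏ i, (p (i + 1) - p (i - 1)) := by
      intro σ
      obtain ⟨d, hd⟩ := hle ⟨Gal.restrict P₅ (AlgebraicClosure K) σ, rfl⟩
      rcases d with k | k
      · rw [map_prod]
        refine Fintype.prod_equiv (Equiv.addRight k) _ _ fun i => ?_
        rw [map_sub, hact, hact, ← hd]
        change p (i + 1 + k) - p (i - 1 + k) = p (i + k + 1) - p (i + k - 1)
        congr 2 <;> ring
      · exact absurd hd.symm (hcon _ k)
    obtain ⟨z, hz⟩ := IntermediateField.mem_bot.1 ((InfiniteGalois.mem_bot_iff_fixed _).2 hfix)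
    rw [← hz, ← map_pow] at hdel
    have hzz := f.injective hdel
    apply not_isSquare_pentagonDisc (z / c ^ 3)
    rw [div_pow, hzz]
    field_simp [c_ne_zero]
  have h5 : 5 ∣ Nat.card P₅.Gal := by
    have hd : P₅.natDegree = 5 := natDegree_quintic n c
    have := Gal.prime_degree_dvd_card irreducible_P₅ (by rw [hd]; norm_num)
    rwa [hd] at this
  have h2 : 2 ∣ Nat.card P₅.Gal := by
    obtain ⟨g, i, hg⟩ := hrefl
    have : orderOf g = 2 := by
      rw [← orderOf_injective ρ hρ, hg, orderOf_injective _ pentagonHom_injective,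
        DihedralGroup.orderOf_sr]
    have hdvd := orderOf_dvd_natCard g
    rwa [this] at hdvd
  have h10 : 10 ≤ Nat.card P₅.Gal :=
    Nat.le_of_dvd Nat.card_pos
      (Nat.Coprime.mul_dvd_of_dvd_of_dvd (by norm_num : Nat.Coprime 2 5) h2 h5)
  have heq : ρ.range = pentagonHom.range := by
    refine Subgroup.eq_of_le_of_card_ge hle ?_
    rw [← Nat.card_congr (ρ.ofInjective hρ).toEquiv,
      ← Nat.card_congr (pentagonHom.ofInjective pentagonHom_injective).toEquiv,
      DihedralGroup.nat_card]
    exact h10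
  exact ⟨(ρ.ofInjective hρ).trans ((MulEquiv.subgroupCongr heq).trans
    (pentagonHom.ofInjective pentagonHom_injective).symm)⟩
end

section
/- Let K = ℚ(t) be the field of rational functions in one variable t over ℚ. Then the Gras polynomial X⁴ − tX³ − 6X² + tX + 1 is irreducible over K and the Galois group of its splitting field over K is cyclic of order 4 (isomorphic to ℤ/4ℤ). -/
/-!
The Gras polynomial is linear in `t`: it equals `(X⁴ - 6X² + 1) - t(X³ - X)`, whose two
coefficients are coprime in `ℚ[X]`. It is therefore irreducible in `ℚ[X][t] = ℚ[t][X]`, and by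
Gauss's lemma over `ℚ(t)`.

If `θ` is one root, the fractional linear map `z ↦ (z - 1) / (z + 1)`, which has order 4, permutes
the roots, so that every root is one of `θ`, `(θ - 1) / (θ + 1)`, `-1 / θ`, `(1 + θ) / (1 - θ)`.
Hence the splitting field is `K(θ)`, of degree 4. The automorphism sending `θ` to
`(θ - 1) / (θ + 1)` has a square sending `θ` to `-1 / θ`, which differs from `θ` because `θ` is not a
root of `X² + 1`. So this automorphism has order 4 and generates the Galois group.
-/

open Polynomial

/-- The variable `t` of the rational function field `K = ℚ(t)`. -/
noncomputable def t : RatFunc ℚ := RatFunc.X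

/-- The Gras simplest quartic polynomial `X⁴ - tX³ - 6X² + tX + 1` over
`K = ℚ(t)`. -/
noncomputable def gras : Polynomial (RatFunc ℚ) :=
  X ^ 4 - C t * X ^ 3 - 6 * X ^ 2 + C t * X + 1

/-- The Gras polynomial with coefficients in `ℚ[t]`, as an element of `ℚ[t][X]`. -/
noncomputable def grasInt : ℚ[X][X] :=
  X ^ 4 - C X * X ^ 3 - 6 * X ^ 2 + C X * X + 1

theorem grasInt_map : grasInt.map (algebraMap ℚ[X] (RatFunc ℚ)) = gras := by
  simp [grasInt, gras, t, RatFunc.algebraMap_X]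

theorem grasInt_natDegree : grasInt.natDegree = 4 := by
  unfold grasInt
  compute_degree!

theorem grasInt_monic : grasInt.Monic := by
  unfold grasInt
  monicity!

/-- The same polynomial with the two variables exchanged has degree 1, with coprime
coefficients. -/
theorem grasInt_irreducible : Irreducible grasInt := by
  have hswap : Bivariate.swap grasInt =
      C (-(X ^ 3 - X) : ℚ[X]) * X + C (X ^ 4 - 6 * X ^ 2 + 1 : ℚ[X]) := by
    simp only [grasInt, map_add, map_sub, map_mul, map_pow, map_neg, map_one, map_ofNat,
      Bivariate.swap_X, Bivariate.swap_Y]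
    ring
  rw [← MulEquiv.irreducible_iff (Bivariate.swap (R := ℚ)), hswap]
  apply irreducible_C_mul_X_add_C
  · intro h
    have := congrArg (eval 2) h
    norm_num at this
  · apply IsCoprime.isRelPrime
    -- At the roots `0`, `±1` of `X³ - X` the polynomial `X⁴ - 6X² + 1` is `1`, `-4`, `-4`; its
    -- cofactor interpolates the inverses of these values.
    refine ⟨-(X * (C (5 / 4) * X ^ 2 - C (29 / 4))), 1 - C (5 / 4) * X ^ 2, ?_⟩
    have h5 : (C (5 / 4) : ℚ[X]) * 4 = 5 := by
      rw [← C_ofNat, ← C_ofNat, ← C_mul]; norm_num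
    have h : (C (29 / 4) : ℚ[X]) = C (5 / 4) + 6 := by
      rw [← C_ofNat, ← C_add]; norm_num
    rw [h]
    linear_combination X ^ 4 * h5

theorem gras_irreducible : Irreducible gras := by
  rw [← grasInt_map]
  exact grasInt_monic.irreducible_iff_irreducible_map_fraction_map.1 grasInt_irreducible

theorem gras_monic : gras.Monic := by
  rw [← grasInt_map]
  exact grasInt_monic.map _

theorem gras_natDegree : gras.natDegree = 4 := by
  rw [← grasInt_map, grasInt_monic.natDegree_map, grasInt_natDegree]

section Roots

variable {F : Type*} [Field F] [Algebra (RatFunc ℚ) F]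

theorem aeval_gras (x : F) : aeval x gras =
    x ^ 4 - algebraMap _ F t * x ^ 3 - 6 * x ^ 2 + algebraMap _ F t * x + 1 := by
  simp [gras, map_ofNat (aeval x : Polynomial (RatFunc ℚ) →ₐ[RatFunc ℚ] F) 6]

theorem minpoly_of_root {x : F} (hx : aeval x gras = 0) : minpoly (RatFunc ℚ) x = gras :=
  (minpoly.eq_of_irreducible_of_monic gras_irreducible hx gras_monic).symm

/-- A root of the Gras polynomial has degree 4, hence is not a root of any nonzero polynomial of
degree less than 4. -/
theorem aeval_ne_zero_of_root {x : F} (hx : aeval x gras = 0) {p : Polynomial (RatFunc ℚ)}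
    (hp : p ≠ 0) (hdeg : p.natDegree < 4) : aeval x p ≠ 0 := by
  intro h
  have hle := natDegree_le_of_dvd (minpoly.dvd (RatFunc ℚ) x h) hp
  rw [minpoly_of_root hx, gras_natDegree] at hle
  omega

theorem root_add_one_ne {x : F} (hx : aeval x gras = 0) : x + 1 ≠ 0 := by
  have h := aeval_ne_zero_of_root hx (X_add_C_ne_zero 1) (by rw [natDegree_X_add_C]; norm_num)
  simpa using h

theorem root_sub_one_ne {x : F} (hx : aeval x gras = 0) : x - 1 ≠ 0 := by
  have h := aeval_ne_zero_of_root hx (X_sub_C_ne_zero 1) (by rw [natDegree_X_sub_C]; norm_num)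
  simpa using h

theorem root_ne_zero {x : F} (hx : aeval x gras = 0) : x ≠ 0 := by
  have h := aeval_ne_zero_of_root hx X_ne_zero (by simp)
  simpa using h

theorem root_sq_add_one_ne {x : F} (hx : aeval x gras = 0) : x ^ 2 + 1 ≠ 0 := by
  have h := aeval_ne_zero_of_root hx (X_pow_add_C_ne_zero (n := 2) (by norm_num) 1)
    (by rw [natDegree_X_pow_add_C]; norm_num)
  simpa using h

theorem root_next {x : F} (hx : aeval x gras = 0) : aeval ((x - 1) / (x + 1)) gras = 0 := by
  have h1 := root_add_one_ne hx
  rw [aeval_gras] at hx ⊢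
  field_simp
  linear_combination (-4) * hx

/-- Eliminating `t` between the equations of two roots `x`, `y` leaves a product of four factors
linear in `y`. -/
theorem root_cases {x y : F} (hx : aeval x gras = 0) (hy : aeval y gras = 0) :
    y = x ∨ y = (x - 1) / (x + 1) ∨ y = -1 / x ∨ y = (1 + x) / (1 - x) := by
  have h1 := root_add_one_ne hx
  have h2 : 1 - x ≠ 0 := by
    rw [← neg_sub]
    exact neg_ne_zero.2 (root_sub_one_ne hx)
  have h0 := root_ne_zero hx
  rw [aeval_gras] at hx hy
  have key : (y - x) * ((y * (x + 1) - (x - 1)) * ((y * x + 1) * (y * (1 - x) - (1 + x)))) = 0 := by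
    linear_combination (y ^ 3 - y) * hx - (x ^ 3 - x) * hy
  rw [eq_div_iff h1, eq_div_iff h0, eq_div_iff h2]
  rcases mul_eq_zero.1 key with h | h
  · exact Or.inl (sub_eq_zero.1 h)
  rcases mul_eq_zero.1 h with h | h
  · exact Or.inr (Or.inl (sub_eq_zero.1 h))
  rcases mul_eq_zero.1 h with h | h
  · exact Or.inr (Or.inr (Or.inl (eq_neg_of_add_eq_zero_left h)))
  · exact Or.inr (Or.inr (Or.inr (sub_eq_zero.1 h)))

end Roots

open IntermediateField in
/-- One root generates the splitting field, since the other roots are rational functions of it. -/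
theorem adjoin_root_eq_top {x : gras.SplittingField} (hx : aeval x gras = 0) :
    (RatFunc ℚ)⟮x⟯ = ⊤ := by
  rw [eq_top_iff, ← (isSplittingField_iff_intermediateField.1
    (IsSplittingField.splittingField gras)).2, adjoin_le_iff]
  intro y hy
  have hxm := mem_adjoin_simple_self (RatFunc ℚ) x
  have h1 := one_mem (RatFunc ℚ)⟮x⟯
  rcases root_cases hx (mem_rootSet.1 hy).2 with rfl | rfl | rfl | rfl
  · exact hxm
  · exact div_mem (sub_mem hxm h1) (add_mem hxm h1)
  · exact div_mem (neg_mem h1) hxm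
  · exact div_mem (add_mem h1 hxm) (sub_mem h1 hxm)

theorem exists_root : ∃ x : gras.SplittingField, aeval x gras = 0 := by
  have hdeg : (gras.map (algebraMap _ gras.SplittingField)).degree ≠ 0 := by
    rw [degree_map]
    exact gras_irreducible.degree_pos.ne'
  obtain ⟨x, hx⟩ := (SplittingField.splits gras).exists_eval_eq_zero hdeg
  exact ⟨x, by rwa [aeval_def, eval₂_eq_eval_map]⟩

theorem card_gal : Nat.card gras.Gal = 4 := by
  obtain ⟨x, hx⟩ := exists_root
  rw [Gal.card_of_separable gras_irreducible.separable, ← IntermediateField.finrank_top',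
    ← adjoin_root_eq_top hx, IntermediateField.adjoin.finrank, minpoly_of_root hx, gras_natDegree]
  exact ⟨gras, gras_monic, hx⟩

theorem gal_isCyclic : IsCyclic gras.Gal := by
  obtain ⟨x, hx⟩ := exists_root
  have hy := root_next hx
  obtain ⟨σ, hσ⟩ : ∃ σ : gras.Gal, σ x = (x - 1) / (x + 1) := by
    apply minpoly.exists_algEquiv_of_root' ⟨gras, gras_monic.ne_zero, hx⟩
    rwa [minpoly_of_root hx]
  have hσσ : σ (σ x) = -1 / x := by
    have h0 := root_ne_zero hx
    have h1 := root_add_one_ne hx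
    have h2 := root_add_one_ne hy
    rw [hσ, map_div₀, map_sub, map_add, map_one, hσ, div_eq_div_iff h2 h0]
    field_simp
    ring
  apply isCyclic_of_orderOf_eq_card σ
  rw [card_gal]
  refine orderOf_eq_prime_pow (p := 2) (n := 1) (fun h => ?_) ?_
  · have h' : σ (σ x) = x := by
      rw [pow_one, pow_two] at h
      exact DFunLike.congr_fun h x
    rw [hσσ, div_eq_iff (root_ne_zero hx)] at h'
    exact root_sq_add_one_ne hx (by linear_combination -h')
  · have := pow_card_eq_one' (x := σ)
    rwa [card_gal] at this

/-- the Gras polynomial `X⁴ - tX³ - 6X² + tX + 1` is irreducible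
over `ℚ(t)` and the Galois group of its splitting field over `ℚ(t)` is cyclic
of order 4, i.e. isomorphic to `ℤ/4ℤ`. -/
theorem stmt_18 :
    Irreducible gras ∧ Nonempty (gras.Gal ≃* Multiplicative (ZMod 4)) := by
  refine ⟨gras_irreducible, ⟨?_⟩⟩
  have e := zmodCyclicMulEquiv gal_isCyclic
  rw [card_gal] at e
  exact e.symm
end
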